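/- Let (W,S) be a Coxeter system, c a Coxeter word (each generator appearing exactly once), and c^∞ the infinite periodic word ccc···. The c-sortable elements of W form a join-sublattice of the c^∞-sorting order that preserves cover relations, and hence the restriction of the c^∞-sorting order to c-sortable elements is a join-distributive lattice. -/

import Mathlib

namespace SortingPaper

variable {B : Type*} {M : CoxeterMatrix B} {W : Type*} [Group W]

/-- Lexicographic comparison of index sets. -/
def lexLE (A C : Finset ℕ) : Prop :=
  A = C ∨ ∃ k, k ∈ A ∧ k ∉ C ∧ ∀ j < k, (j ∈ A ↔ j ∈ C)

/-- The (finite) subword of a semi-infinite word `ω : ℕ → B` with index set `A`. -/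
def subwordInf (ω : ℕ → B) (A : Finset ℕ) : List B :=
  (A.sort (· ≤ ·)).map ω

/-- `A` is the index set of an ω-sorted word for the semi-infinite word `ω`. -/
def IsSortedInf (cs : CoxeterSystem M W) (ω : ℕ → B) (A : Finset ℕ) : Prop :=
  cs.IsReduced (subwordInf ω A) ∧
  ∀ C : Finset ℕ, cs.IsReduced (subwordInf ω C) →
    cs.wordProd (subwordInf ω C) = cs.wordProd (subwordInf ω A) → lexLE A C

/-- `A` is the c-sorted index set of a c-sortable element: it is `c^∞`-sorted and the
underlying letter sets of its consecutive blocks (copies of `c`) form a descending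
chain. -/
def Sortable [DecidableEq B] (cs : CoxeterSystem M W) (c : List B) (ω : ℕ → B)
    (A : Finset ℕ) : Prop :=
  IsSortedInf cs ω A ∧
  ∀ k : ℕ, ((A.filter fun i => i / c.length = k + 1).image fun i => ω i) ⊆
    ((A.filter fun i => i / c.length = k).image fun i => ω i)

section Bruhat
open CoxeterSystem List
variable {B : Type*} {M : CoxeterMatrix B} {W : Type*} [Group W] (cs : CoxeterSystem M W)

open Classical in
/-- The action of a simple reflection on `W × ZMod 2`. -/
noncomputable def eta (i : B) : Function.End (W × ZMod 2) :=
  fun p => (cs.simple i * p.1 * cs.simple i, p.2 + if p.1 = cs.simple i then 1 else 0)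

open Classical in
theorem eta_prod (l : List B) (p : W × ZMod 2) :
    (l.map (eta cs)).prod p =
      (cs.wordProd l * p.1 * (cs.wordProd l)⁻¹, p.2 + ((cs.rightInvSeq l).count p.1 : ZMod 2)) := by
  induction l with
  | nil => simp; rfl
  | cons i l ih =>
    rw [List.map_cons, List.prod_cons]
    change eta cs i ((l.map (eta cs)).prod p) = _
    rw [ih]
    simp only [eta, rightInvSeq, wordProd_cons, List.count_cons, mul_inv_rev, inv_simple]
    refine Prod.ext (by simp [mul_assoc]) ?_
    have : (cs.wordProd l * p.1 * (cs.wordProd l)⁻¹ = cs.simple i) ↔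
        ((cs.wordProd l)⁻¹ * cs.simple i * cs.wordProd l == p.1) = true := by
      rw [beq_iff_eq]
      constructor
      · intro h; rw [← h]; group
      · intro h; rw [← h]; group
    simp only [this]
    push_cast
    split_ifs <;> simp [add_assoc]

theorem list_even_count {α : Type*} [DecidableEq α] (l : List α) (m : ℕ) (hl : l.length = 2 * m)
    (h : ∀ k, k < m → l[k]? = l[k + m]?) (a : α) : Even (l.count a) := by
  have : l = l.take m ++ l.take m := by
    nth_rw 1 [← List.take_append_drop m l]
    congr 1
    apply List.ext_getElem?
    intro k
    rw [List.getElem?_drop, List.getElem?_take]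
    split_ifs with hk
    · rw [h k hk, add_comm]
    · apply List.getElem?_eq_none; omega
  rw [this, List.count_append]
  exact ⟨_, rfl⟩

theorem eta_liftable : M.IsLiftable (eta cs) := by
  classical
  intro i j
  have h1 : ∀ m : ℕ, (eta cs i * eta cs j) ^ m = ((alternatingWord i j (2 * m)).map (eta cs)).prod := by
    intro m
    induction m with
    | zero => simp [alternatingWord]
    | succ m ih =>
      rw [pow_succ', ih, show 2 * (m + 1) = (2 * m + 1) + 1 by ring, alternatingWord_succ',
        alternatingWord_succ']
      simp [mul_assoc]
  rw [h1]
  funext p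
  rw [eta_prod]
  have hp : cs.wordProd (alternatingWord i j (2 * M i j)) = 1 := by
    rw [prod_alternatingWord_eq_mul_pow]
    simp
  have hev : Even ((cs.rightInvSeq (alternatingWord i j (2 * M i j))).count p.1) := by
    have hr : cs.rightInvSeq (alternatingWord i j (2 * M i j)) =
        (cs.leftInvSeq (alternatingWord i j (2 * M i j)).reverse).reverse := by
      rw [leftInvSeq_reverse, List.reverse_reverse]
    have hrev : (alternatingWord i j (2 * M i j)).reverse = alternatingWord j i (2 * M i j) := by
      generalize M i j = m
      induction m with
      | zero => simp [alternatingWord]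
      | succ m ih =>
        conv_lhs => rw [show 2 * (m + 1) = (2 * m + 1) + 1 by ring, alternatingWord_succ',
          alternatingWord_succ']
        rw [show 2 * (m + 1) = (2 * m + 1) + 1 by ring, alternatingWord_succ, alternatingWord_succ]
        simp [ih]
    rw [hr, hrev, List.count_reverse]
    apply list_even_count _ (M i j) (by simp)
    intro k hk
    rw [List.getElem?_eq_getElem (by simp; omega), List.getElem?_eq_getElem (by simp; omega)]
    rw [getElem_leftInvSeq_alternatingWord _ _ _ _ _ (by omega),
      getElem_leftInvSeq_alternatingWord _ _ _ _ _ (by omega)]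
    congr 1
    rw [prod_alternatingWord_eq_mul_pow, prod_alternatingWord_eq_mul_pow]
    have e1 : (2 * k + 1) / 2 = k := by omega
    have e2 : (2 * (k + M i j) + 1) / 2 = k + M i j := by omega
    rw [e1, e2, pow_add]
    simp
  rw [hp]
  refine Prod.ext (by simp; rfl) ?_
  simp only
  rw [(ZMod.natCast_eq_zero_iff_even).2 hev, add_zero]
  rfl

/-- The parity of occurrences of `t` in the right inversion sequence of a word for `w`. -/
noncomputable def NN (w t : W) : ZMod 2 := (cs.lift ⟨eta cs, eta_liftable cs⟩ w (t, 0)).2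

open Classical in
theorem lift_word (l : List B) (p : W × ZMod 2) :
    cs.lift ⟨eta cs, eta_liftable cs⟩ (cs.wordProd l) p =
      (cs.wordProd l * p.1 * (cs.wordProd l)⁻¹, p.2 + ((cs.rightInvSeq l).count p.1 : ZMod 2)) := by
  rw [← eta_prod, wordProd, map_list_prod, List.map_map]
  have : (cs.lift ⟨eta cs, eta_liftable cs⟩ : W → Function.End (W × ZMod 2)) ∘ cs.simple = eta cs := by
    funext i
    simp only [Function.comp_apply, lift_apply_simple]
  rw [this]

open Classical in
theorem NN_word (l : List B) (t : W) :
    NN cs (cs.wordProd l) t = ((cs.rightInvSeq l).count t : ZMod 2) := by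
  rw [NN, lift_word]; simp

theorem lift_eq (w : W) (p : W × ZMod 2) :
    cs.lift ⟨eta cs, eta_liftable cs⟩ w p = (w * p.1 * w⁻¹, p.2 + NN cs w p.1) := by
  classical
  obtain ⟨l, rfl⟩ := cs.wordProd_surjective w
  rw [lift_word, NN_word]

theorem NN_mul (u w t : W) : NN cs (u * w) t = NN cs w t + NN cs u (w * t * w⁻¹) := by
  rw [NN, map_mul]
  change (cs.lift ⟨eta cs, eta_liftable cs⟩ u (cs.lift ⟨eta cs, eta_liftable cs⟩ w (t, 0))).2 = _
  rw [lift_eq, lift_eq]; simp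

theorem NN_one (t : W) : NN cs 1 t = 0 := by
  classical
  have := NN_word cs [] t
  simpa using this

theorem NN_refl (t : W) (ht : cs.IsReflection t) : NN cs t t = 1 := by
  classical
  obtain ⟨u, i, rfl⟩ := ht
  have h1 : NN cs (cs.simple i) (cs.simple i) = 1 := by
    have := NN_word cs [i] (cs.simple i)
    simpa using this
  rw [NN_mul, NN_mul]
  have h2 := NN_mul cs u u⁻¹ (u * cs.simple i * u⁻¹)
  rw [mul_inv_cancel, NN_one] at h2
  have e : u⁻¹ * (u * cs.simple i * u⁻¹) * u⁻¹⁻¹ = cs.simple i := by group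
  rw [e] at h2 ⊢
  have e3 : cs.simple i * cs.simple i * (cs.simple i)⁻¹ = cs.simple i := by group
  rw [e3, h1]
  calc _ = (NN cs u⁻¹ (u * cs.simple i * u⁻¹) + NN cs u (cs.simple i)) + 1 := by ring
    _ = 1 := by rw [← h2, zero_add]

theorem mem_ris_of_NN (l : List B) (t : W) (h : NN cs (cs.wordProd l) t ≠ 0) :
    t ∈ cs.rightInvSeq l := by
  classical
  by_contra hc
  rw [NN_word, List.count_eq_zero_of_not_mem hc] at h
  simp at h

theorem strong_exchange (l : List B) (t : W) (ht : cs.IsReflection t)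
    (hl : cs.length (cs.wordProd l * t) < cs.length (cs.wordProd l)) :
    ∃ j, cs.wordProd l * t = cs.wordProd (l.eraseIdx j) := by
  by_cases h : NN cs (cs.wordProd l) t = 0
  · exfalso
    obtain ⟨r, hr, e⟩ := cs.exists_isReduced (cs.wordProd l * t)
    have h2 := NN_mul cs (cs.wordProd l) t t
    rw [NN_refl cs t ht, mul_inv_cancel_right, h, add_zero, e] at h2
    have := cs.isRightInversion_of_mem_rightInvSeq hr (mem_ris_of_NN cs r t (by rw [h2]; simp))
    have h3 := this.2
    rw [← e, mul_assoc, ht.mul_self, mul_one] at h3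
    omega
  · obtain ⟨j, hj, rfl⟩ := List.mem_iff_getElem.mp (mem_ris_of_NN cs l t h)
    refine ⟨j, ?_⟩
    rw [← List.getD_eq_getElem _ 1 hj, wordProd_mul_getD_rightInvSeq]

theorem refl_conj (i : B) (w : W) : cs.IsReflection (w⁻¹ * cs.simple i * w) := by
  have := (cs.isReflection_simple i).conj w⁻¹
  simpa using this

theorem left_exchange (l : List B) (i : B) (h : cs.IsLeftDescent (cs.wordProd l) i) :
    ∃ j, cs.simple i * cs.wordProd l = cs.wordProd (l.eraseIdx j) := by
  have e : cs.wordProd l * ((cs.wordProd l)⁻¹ * cs.simple i * cs.wordProd l) =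
    cs.simple i * cs.wordProd l := by group
  obtain ⟨j, hj⟩ := strong_exchange cs l _ (refl_conj cs i (cs.wordProd l)) (by rw [e]; exact h)
  exact ⟨j, by rw [← hj, e]⟩

/-- An arrow of the Bruhat graph. -/
def Arrow (u w : W) : Prop := ∃ t, cs.IsReflection t ∧ w = u * t ∧ cs.length u < cs.length w

theorem arrow_simple {u w : W} (h : Arrow cs u w) (i : B) :
    cs.simple i * u = w ∨ Arrow cs (cs.simple i * u) (cs.simple i * w) := by
  obtain ⟨t, ht, rfl, hl⟩ := h
  by_cases hc : cs.length (cs.simple i * u) < cs.length (cs.simple i * (u * t))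
  · exact Or.inr ⟨t, ht, by simp [mul_assoc], hc⟩
  left
  have h1 := cs.length_simple_mul u i
  have h2 := cs.length_simple_mul (u * t) i
  obtain ⟨y, hy, e⟩ := cs.exists_isReduced (cs.simple i * (u * t))
  have e1 : cs.wordProd (i :: y) = u * t := by
    rw [wordProd_cons, ← e]; simp
  have e2 : cs.wordProd (i :: y) * t = u := by
    rw [e1, mul_assoc, ht.mul_self, mul_one]
  obtain ⟨j, hj⟩ := strong_exchange cs (i :: y) t ht (by rw [e2, e1]; exact hl)
  rw [e2] at hj
  cases j with
  | zero =>
    rw [List.eraseIdx_cons_zero] at hj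
    rw [← e1, wordProd_cons, hj]
  | succ j =>
    exfalso
    rw [List.eraseIdx_cons_succ, wordProd_cons] at hj
    have e3 : cs.simple i * u = cs.wordProd (y.eraseIdx j) := by rw [hj]; simp
    have h4 := cs.length_wordProd_le (y.eraseIdx j)
    have h5 : (y.eraseIdx j).length ≤ y.length := List.length_eraseIdx_le y j
    have h6 : cs.length (cs.wordProd y) = y.length := hy
    rw [← e3] at h4
    rw [← e] at h6
    have h7 : cs.length (cs.simple i * (u * t)) ≠ cs.length (cs.simple i * u) := by
      rw [← mul_assoc]; exact ht.length_mul_left_ne _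
    omega

/-- The Bruhat order. -/
def BLe (u w : W) : Prop := Relation.ReflTransGen (Arrow cs) u w

theorem ble_simple {u w : W} (h : BLe cs u w) (i : B) :
    BLe cs (cs.simple i * u) w ∨ BLe cs (cs.simple i * u) (cs.simple i * w) := by
  induction h with
  | refl => exact Or.inr .refl
  | tail h1 h2 ih =>
    rcases ih with ih | ih
    · exact Or.inl (ih.tail h2)
    · rcases arrow_simple cs h2 i with h3 | h3
      · left; rwa [h3] at ih
      · exact Or.inr (ih.tail h3)

theorem reduced_cons_iff (i : B) (l : List B) :
    cs.IsReduced (i :: l) ↔ cs.IsReduced l ∧ ¬ cs.IsLeftDescent (cs.wordProd l) i := by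
  rw [not_isLeftDescent_iff]
  unfold CoxeterSystem.IsReduced
  rw [wordProd_cons, List.length_cons]
  have h1 := cs.length_simple_mul (cs.wordProd l) i
  have h2 := cs.length_wordProd_le l
  omega

theorem ble_of_sublist {l a : List B} (ha : cs.IsReduced a) (h : l.Sublist a) :
    BLe cs (cs.wordProd l) (cs.wordProd a) := by
  induction h with
  | slnil => exact .refl
  | @cons l a i h ih =>
    rw [reduced_cons_iff] at ha
    refine (ih ha.1).tail ⟨_, refl_conj cs i (cs.wordProd a), ?_, ?_⟩
    · rw [wordProd_cons]; group
    · rw [wordProd_cons]; have := (cs.not_isLeftDescent_iff).1 ha.2; omega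
  | @cons_cons l a i h ih =>
    rw [reduced_cons_iff] at ha
    have h2 : Arrow cs (cs.wordProd a) (cs.wordProd (i :: a)) := by
      refine ⟨_, refl_conj cs i (cs.wordProd a), ?_, ?_⟩
      · rw [wordProd_cons]; group
      · rw [wordProd_cons]; have := (cs.not_isLeftDescent_iff).1 ha.2; omega
    rcases ble_simple cs (ih ha.1) i with h3 | h3
    · rw [wordProd_cons]; exact h3.tail h2
    · rw [wordProd_cons, wordProd_cons]; exact h3

theorem sublist_of_ble {u w : W} (h : BLe cs u w) (b : List B) (hb : cs.wordProd b = w) :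
    ∃ l, l.Sublist b ∧ cs.wordProd l = u := by
  induction h using Relation.ReflTransGen.head_induction_on with
  | refl => exact ⟨b, List.Sublist.refl _, hb⟩
  | @head a c h1 h2 ih =>
    obtain ⟨l, hl, e⟩ := ih
    obtain ⟨t, ht, e1, hlen⟩ := h1
    have e2 : cs.wordProd l * t = a := by rw [e, e1, mul_assoc, ht.mul_self, mul_one]
    obtain ⟨j, hj⟩ := strong_exchange cs l t ht (by rw [e2, e]; exact hlen)
    exact ⟨l.eraseIdx j, (List.eraseIdx_sublist l j).trans hl, by rw [← hj, e2]⟩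

theorem reduce (b : List B) : ∃ l, l.Sublist b ∧ cs.IsReduced l ∧ cs.wordProd l = cs.wordProd b := by
  induction b with
  | nil => exact ⟨[], List.Sublist.refl _, by simp [CoxeterSystem.IsReduced], rfl⟩
  | cons i b ih =>
    obtain ⟨l, hl, hr, e⟩ := ih
    by_cases hd : cs.IsLeftDescent (cs.wordProd l) i
    · obtain ⟨j, hj⟩ := left_exchange cs l i hd
      refine ⟨l.eraseIdx j, ((List.eraseIdx_sublist l j).trans hl).cons i, ?_, ?_⟩
      · have h1 := (cs.isLeftDescent_iff).1 hd
        rw [hj] at h1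
        have h2 := cs.length_wordProd_le (l.eraseIdx j)
        have h3 : cs.length (cs.wordProd l) = l.length := hr
        unfold CoxeterSystem.IsReduced
        by_cases hjl : j < l.length
        · have := List.length_eraseIdx_add_one hjl
          omega
        · rw [List.eraseIdx_of_length_le (by omega)] at h1
          omega
      · rw [← hj, e, wordProd_cons]
    · exact ⟨i :: l, hl.cons_cons i, (reduced_cons_iff cs i l).2 ⟨hr, hd⟩, by
        rw [wordProd_cons, wordProd_cons, e]⟩

theorem subword_property {a b q : List B} (ha : cs.IsReduced a) (hab : cs.wordProd b = cs.wordProd a)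
    (hq : q.Sublist a) : ∃ l, l.Sublist b ∧ cs.IsReduced l ∧ cs.wordProd l = cs.wordProd q := by
  obtain ⟨l, hl, e⟩ := sublist_of_ble cs (ble_of_sublist cs ha hq) b hab
  obtain ⟨l', hl', hr, e'⟩ := reduce cs l
  exact ⟨l', hl'.trans hl, hr, e'.trans e⟩

theorem reduced_append_left {a b : List B} (h : cs.IsReduced (a ++ b)) : cs.IsReduced a := by
  simpa using h.take a.length

theorem reduced_append_right {a b : List B} (h : cs.IsReduced (a ++ b)) : cs.IsReduced b := by
  simpa using h.drop a.length

end Bruhat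

section Segments
open CoxeterSystem
variable {B : Type*} {M : CoxeterMatrix B} {W : Type*} [Group W] (cs : CoxeterSystem M W)

/-- The subword of `ω` with positions in `A ∩ [a, b)`. -/
def seg (ω : ℕ → B) (A : Finset ℕ) (a b : ℕ) : List B :=
  ((List.Ico a b).filter (fun k => k ∈ A)).map ω

variable (ω : ℕ → B)

theorem seg_nil (A : Finset ℕ) {a b : ℕ} (h : b ≤ a) : seg ω A a b = [] := by
  simp [seg, List.Ico.eq_nil_of_le h]

theorem seg_cons_mem {A : Finset ℕ} {a b : ℕ} (h : a < b) (ha : a ∈ A) :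
    seg ω A a b = ω a :: seg ω A (a + 1) b := by
  simp [seg, List.Ico.eq_cons h, ha]

theorem seg_cons_notMem {A : Finset ℕ} {a b : ℕ} (h : a < b) (ha : a ∉ A) :
    seg ω A a b = seg ω A (a + 1) b := by
  simp [seg, List.Ico.eq_cons h, ha]

theorem seg_append (A : Finset ℕ) {a b d : ℕ} (h : a ≤ b) (h' : b ≤ d) :
    seg ω A a d = seg ω A a b ++ seg ω A b d := by
  simp [seg, ← List.Ico.append_consecutive h h']

theorem seg_congr {A C : Finset ℕ} {a b : ℕ} (h : ∀ k, a ≤ k → k < b → (k ∈ A ↔ k ∈ C)) :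
    seg ω A a b = seg ω C a b := by
  unfold seg
  congr 1
  apply List.filter_congr
  intro k hk
  rw [List.Ico.mem] at hk
  simp [h k hk.1 hk.2]

theorem seg_sublist {A C : Finset ℕ} {a b : ℕ} (h : ∀ k, a ≤ k → k < b → k ∈ A → k ∈ C) :
    (seg ω A a b).Sublist (seg ω C a b) := by
  unfold seg
  apply List.Sublist.map
  have : (List.Ico a b).filter (fun k => k ∈ A) =
      ((List.Ico a b).filter (fun k => k ∈ C)).filter (fun k => k ∈ A) := by
    rw [List.filter_filter]
    apply List.filter_congr
    intro k hk
    rw [List.Ico.mem] at hk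
    have := h k hk.1 hk.2
    by_cases h1 : k ∈ A <;> simp [h1, this]
  rw [this]
  exact List.filter_sublist

theorem seg_sublist_full (A : Finset ℕ) (a b : ℕ) :
    (seg ω A a b).Sublist ((List.Ico a b).map ω) :=
  List.filter_sublist.map ω

theorem exists_seg_of_sublist {A : Finset ℕ} {a b : ℕ} {l : List B}
    (h : l.Sublist (seg ω A a b)) : ∃ D : Finset ℕ, l = seg ω D a b := by
  obtain ⟨l', hl', rfl⟩ := List.sublist_map_iff.1 h
  have h1 : l'.Sublist (List.Ico a b) := hl'.trans List.filter_sublist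
  refine ⟨l'.toFinset, ?_⟩
  unfold seg
  congr 1
  have hs : l'.Pairwise (· < ·) := (List.Ico.pairwise_lt a b).sublist h1
  have hs2 : ((List.Ico a b).filter (fun k => k ∈ l'.toFinset)).Pairwise (· < ·) :=
    (List.Ico.pairwise_lt a b).sublist List.filter_sublist
  apply List.Perm.eq_of_pairwise (le := (· < ·)) _ hs hs2
  · rw [List.perm_ext_iff_of_nodup (hs.imp (fun h => ne_of_lt h)) (hs2.imp (fun h => ne_of_lt h))]
    intro k
    simp only [List.mem_filter, List.mem_toFinset, decide_eq_true_eq]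
    exact ⟨fun hk => ⟨h1.subset hk, hk⟩, fun hk => hk.2⟩
  · intro x y _ _ h1 h2
    omega

theorem subwordInf_eq {A : Finset ℕ} {N : ℕ} (h : ∀ k ∈ A, k < N) :
    subwordInf ω A = seg ω A 0 N := by
  unfold subwordInf seg
  congr 1
  have hs2 : ((List.Ico 0 N).filter (fun k => k ∈ A)).Pairwise (· < ·) :=
    (List.Ico.pairwise_lt 0 N).sublist List.filter_sublist
  apply List.Perm.eq_of_pairwise (le := (· ≤ ·)) _ (Finset.pairwise_sort A _)
    (hs2.imp (fun h => le_of_lt h))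
  · rw [List.perm_ext_iff_of_nodup (Finset.sort_nodup A _) (hs2.imp (fun h => ne_of_lt h))]
    intro k
    simp only [List.mem_filter, Finset.mem_sort, decide_eq_true_eq, List.Ico.mem]
    exact ⟨fun hk => ⟨⟨by omega, h k hk⟩, hk⟩, fun hk => hk.2⟩
  · intro x y _ _ h1 h2
    omega

/-- Local characterization of sorted index sets. -/
def Good (A : Finset ℕ) (N : ℕ) : Prop :=
  ∀ k < N, ¬ cs.IsLeftDescent (cs.wordProd (seg ω A (k + 1) N)) (ω k)

theorem reduced_of_good (A : Finset ℕ) (N k : ℕ)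
    (h : ∀ m, k ≤ m → m < N → ¬ cs.IsLeftDescent (cs.wordProd (seg ω A (m + 1) N)) (ω m)) :
    cs.IsReduced (seg ω A k N) := by
  generalize hd : N - k = d
  induction d generalizing k with
  | zero =>
    rw [seg_nil ω A (by omega)]; simp [CoxeterSystem.IsReduced]
  | succ d ih =>
    have h1 := ih (k + 1) (fun m hm => h m (by omega)) (by omega)
    by_cases hk : k ∈ A
    · rw [seg_cons_mem ω (by omega) hk, reduced_cons_iff]
      exact ⟨h1, h k le_rfl (by omega)⟩
    · rwa [seg_cons_notMem ω (by omega) hk]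

theorem good_mono {A : Finset ℕ} {N N' : ℕ} (hA : ∀ k ∈ A, k < N) (hN : N ≤ N')
    (h : Good cs ω A N) : Good cs ω A N' := by
  have h0 : ∀ a, N ≤ a → seg ω A a N' = [] := by
    intro a ha
    rw [seg_congr ω (C := ∅)]
    · simp [seg]
    · intro k h1 _
      have := hA k
      simp only [Finset.notMem_empty, iff_false]
      intro h2
      have := hA k h2
      omega
  intro k hk
  by_cases hkN : k < N
  · rw [seg_append ω A (b := N) (by omega) hN, h0 N le_rfl, List.append_nil]
    exact h k hkN
  · rw [h0 _ (by omega)]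
    simpa using cs.not_isLeftDescent_one _

theorem good_of_sorted {A : Finset ℕ} {N : ℕ} (hA : ∀ k ∈ A, k < N)
    (h : IsSortedInf cs ω A) : Good cs ω A N := by
  obtain ⟨hr, hm⟩ := h
  have hw := subwordInf_eq ω hA
  rw [hw] at hr hm
  intro k hk hd
  rw [seg_append ω A (Nat.zero_le k) hk.le] at hr hm
  by_cases hkA : k ∈ A
  · rw [seg_cons_mem ω hk hkA] at hr
    exact ((reduced_cons_iff cs _ _).1 (reduced_append_right cs hr)).2 hd
  rw [seg_cons_notMem ω hk hkA] at hr hm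
  have hr2 := reduced_append_right cs hr
  obtain ⟨j, hj⟩ := left_exchange cs _ _ hd
  obtain ⟨D, hD⟩ := exists_seg_of_sublist ω (List.eraseIdx_sublist (seg ω A (k + 1) N) j)
  set C : Finset ℕ := (Finset.range N).filter
    (fun m => (m < k ∧ m ∈ A) ∨ m = k ∨ (k < m ∧ m ∈ D)) with hC
  have hCN : ∀ m ∈ C, m < N := by
    intro m hm
    simp [hC] at hm
    exact hm.1
  have hkC : k ∈ C := by simp [hC, hk]
  have hlow : ∀ m, m < k → (m ∈ A ↔ m ∈ C) := by
    intro m hm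
    simp only [hC, Finset.mem_filter, Finset.mem_range]
    constructor
    · intro h; exact ⟨by omega, Or.inl ⟨hm, h⟩⟩
    · rintro ⟨-, h | h | h⟩
      · exact h.2
      · omega
      · omega
  have hhigh : seg ω C (k + 1) N = seg ω D (k + 1) N := by
    apply seg_congr
    intro m h1 h2
    simp only [hC, Finset.mem_filter, Finset.mem_range]
    constructor
    · rintro ⟨-, h | h | h⟩
      · omega
      · omega
      · exact h.2
    · intro h; exact ⟨h2, Or.inr (Or.inr ⟨by omega, h⟩)⟩
  have hCw : subwordInf ω C = seg ω A 0 k ++ (ω k :: (seg ω A (k + 1) N).eraseIdx j) := by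
    rw [subwordInf_eq ω hCN, seg_append ω C (Nat.zero_le k) hk.le, seg_cons_mem ω hk hkC, hhigh,
      ← hD, seg_congr ω (fun m _ hm => (hlow m hm).symm)]
  have hprod : cs.wordProd (subwordInf ω C) = cs.wordProd (seg ω A 0 k ++ seg ω A (k + 1) N) := by
    rw [hCw, wordProd_append, wordProd_append, wordProd_cons, ← hj]
    simp
  have hjl : j < (seg ω A (k + 1) N).length := by
    by_contra hc
    rw [List.eraseIdx_of_length_le (by omega)] at hj
    exact cs.length_simple_mul_ne _ _ (congrArg cs.length hj)
  have hred : cs.IsReduced (subwordInf ω C) := by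
    unfold CoxeterSystem.IsReduced at hr ⊢
    rw [hprod, hr, hCw]
    have := List.length_eraseIdx_add_one hjl
    simp only [List.length_append, List.length_cons]
    omega
  rcases hm C hred hprod with h | ⟨m, h1, h2, h3⟩
  · rw [h] at hkA; exact hkA hkC
  · rcases lt_trichotomy m k with h | h | h
    · exact h2 ((hlow m h).1 h1)
    · rw [h] at h1; exact hkA h1
    · exact hkA ((h3 k h).2 hkC)

theorem sorted_of_good {A : Finset ℕ} {N : ℕ} (hA : ∀ k ∈ A, k < N)
    (h : Good cs ω A N) : IsSortedInf cs ω A := by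
  constructor
  · rw [subwordInf_eq ω hA]
    exact reduced_of_good cs ω A N 0 (fun m _ hm => h m hm)
  intro C hC hprod
  obtain ⟨N', hN, hCN⟩ : ∃ N', N ≤ N' ∧ ∀ k ∈ C, k < N' := by
    refine ⟨max N (C.sup id + 1), le_max_left _ _, fun k hk => ?_⟩
    have := Finset.le_sup (f := id) hk
    simp only [id] at this
    exact lt_of_lt_of_le (Nat.lt_succ_of_le this) (le_max_right _ _)
  have hg := good_mono cs ω hA hN h
  have hA' : ∀ k ∈ A, k < N' := fun k hk => lt_of_lt_of_le (hA k hk) hN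
  rw [subwordInf_eq ω hCN] at hC hprod
  rw [subwordInf_eq ω hA'] at hprod
  by_cases hAC : A = C
  · exact Or.inl hAC
  right
  have hex : ∃ k, ¬ (k ∈ A ↔ k ∈ C) := by
    by_contra hc
    push Not at hc
    exact hAC (Finset.ext hc)
  classical
  have hmin : ∀ m < Nat.find hex, (m ∈ A ↔ m ∈ C) := fun m hm => not_not.1 (Nat.find_min hex hm)
  have hk := Nat.find_spec hex
  generalize Nat.find hex = k at hmin hk
  by_cases hkA : k ∈ A
  · exact ⟨k, hkA, fun h => hk (by simp [h, hkA]), hmin⟩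
  exfalso
  have hkC : k ∈ C := by
    by_contra h
    exact hk (by simp [h, hkA])
  have hkN := hCN k hkC
  rw [seg_append ω C (Nat.zero_le k) hkN.le] at hC hprod
  rw [seg_append ω A (Nat.zero_le k) hkN.le, wordProd_append, wordProd_append,
    seg_congr ω (fun m _ hm => hmin m hm)] at hprod
  have hp := mul_left_cancel hprod
  have hr := reduced_append_right cs hC
  rw [seg_cons_mem ω hkN hkC] at hr hp
  rw [seg_cons_notMem ω hkN hkA] at hp
  apply hg k hkN
  rw [← hp]
  have := (cs.not_isLeftDescent_iff).1 ((reduced_cons_iff cs _ _).1 hr).2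
  unfold IsLeftDescent
  rw [wordProd_cons, simple_mul_simple_cancel_left]
  omega

theorem not_desc_prefix {a b : List B} {i : B} (h : cs.IsReduced (a ++ b))
    (hd : ¬ cs.IsLeftDescent (cs.wordProd (a ++ b)) i) : ¬ cs.IsLeftDescent (cs.wordProd a) i := by
  have h1 : cs.IsReduced (i :: (a ++ b)) := (reduced_cons_iff cs _ _).2 ⟨h, hd⟩
  rw [← List.cons_append] at h1
  exact ((reduced_cons_iff cs _ _).1 (reduced_append_left cs h1)).2

theorem greedy_last (C : Finset ℕ) (x j : ℕ) (hj : j ≤ x)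
    (h : ∀ m, j ≤ m → m < x → ¬ cs.IsLeftDescent (cs.wordProd (seg ω C (m + 1) x ++ [ω x])) (ω m))
    (l : List B) (hl : l.Sublist ((List.Ico j x).map ω)) (hr : cs.IsReduced l)
    (e : cs.wordProd l = cs.wordProd (seg ω C j x ++ [ω x])) : False := by
  generalize hd : x - j = d
  induction d generalizing j l with
  | zero =>
    obtain rfl : j = x := by omega
    rw [List.Ico.self_empty, List.map_nil, List.sublist_nil] at hl
    rw [hl, seg_nil ω C le_rfl] at e
    have := congrArg cs.length e
    simp at this
  | succ d ih =>
    have hjx : j < x := by omega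
    have h' : ∀ m, j + 1 ≤ m → m < x →
      ¬ cs.IsLeftDescent (cs.wordProd (seg ω C (m + 1) x ++ [ω x])) (ω m) :=
      fun m hm => h m (by omega)
    have hnd := h j le_rfl hjx
    rw [List.Ico.eq_cons hjx, List.map_cons] at hl
    by_cases hjC : j ∈ C
    · rw [seg_cons_mem ω hjx hjC, List.cons_append, wordProd_cons] at e
      have e2 : cs.simple (ω j) * cs.wordProd l = cs.wordProd (seg ω C (j + 1) x ++ [ω x]) := by
        rw [e]; simp
      have hdl : cs.IsLeftDescent (cs.wordProd l) (ω j) := by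
        have := (cs.not_isLeftDescent_iff).1 hnd
        unfold IsLeftDescent
        rw [e2, e]
        omega
      rcases List.sublist_cons_iff.1 hl with hl | ⟨r, rfl, hl'⟩
      · obtain ⟨i, hi⟩ := left_exchange cs l _ hdl
        obtain ⟨l', hl', hr', e'⟩ := reduce cs (l.eraseIdx i)
        exact ih (j + 1) hjx h' l' (hl'.trans ((List.eraseIdx_sublist l i).trans hl)) hr'
          (by rw [e', ← hi, e2]) (by omega)
      · refine ih (j + 1) hjx h' r hl' ((reduced_cons_iff cs _ _).1 hr).1 ?_ (by omega)
        rw [← e2, wordProd_cons]; simp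
    · rw [seg_cons_notMem ω hjx hjC] at e
      rcases List.sublist_cons_iff.1 hl with hl | ⟨r, rfl, hl'⟩
      · exact ih (j + 1) hjx h' l hl hr e (by omega)
      · apply hnd
        rw [← e]
        have := (cs.not_isLeftDescent_iff).1 ((reduced_cons_iff cs _ _).1 hr).2
        unfold IsLeftDescent
        rw [wordProd_cons, simple_mul_simple_cancel_left]
        omega

theorem good_insert {A C : Finset ℕ} {N x : ℕ} (hA : Good cs ω A N) (hC : Good cs ω C N)
    (hxC : x ∈ C) (hxA : x ∉ A) (hxN : x < N) (hlow : ∀ k < x, k ∈ C → k ∈ A) :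
    Good cs ω (insert x A) N := by
  have hhi : ∀ a, x < a → seg ω (insert x A) a N = seg ω A a N := by
    intro a ha
    apply seg_congr
    intro k h1 h2
    rw [Finset.mem_insert]
    constructor
    · rintro (h | h)
      · omega
      · exact h
    · exact Or.inr
  have hlo : ∀ a, seg ω (insert x A) a x = seg ω A a x := by
    intro a
    apply seg_congr
    intro k h1 h2
    rw [Finset.mem_insert]
    constructor
    · rintro (h | h)
      · omega
      · exact h
    · exact Or.inr
  suffices H : ∀ d k, k < N → N - k = d →
      ¬ cs.IsLeftDescent (cs.wordProd (seg ω (insert x A) (k + 1) N)) (ω k) from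
    fun k hk => H _ k hk rfl
  intro d
  induction d using Nat.strong_induction_on with
  | _ d ih =>
  intro k hk hd hdesc
  by_cases hxk : x ≤ k
  · rw [hhi _ (by omega)] at hdesc
    exact hA k hk hdesc
  have hkx : k < x := by omega
  have hred' : cs.IsReduced (seg ω (insert x A) (k + 1) N) :=
    reduced_of_good cs ω _ _ _ (fun m h1 h2 => ih (N - m) (by omega) m h2 rfl)
  have hred : cs.IsReduced (seg ω A (k + 1) N) :=
    reduced_of_good cs ω _ _ _ (fun m _ h2 => hA m h2)
  have hnd := hA k hk
  have hC' : cs.IsReduced (seg ω C (k + 1) N) :=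
    reduced_of_good cs ω _ _ _ (fun m _ h2 => hC m h2)
  rw [seg_append ω (insert x A) (b := x) (by omega) hxN.le,
    seg_cons_mem ω hxN (Finset.mem_insert_self x A), hlo, hhi _ (by omega)] at hdesc hred'
  rw [seg_append ω A (b := x) (by omega) hxN.le, seg_cons_notMem ω hxN hxA] at hnd hred
  set p := seg ω A (k + 1) x with hp
  set v := seg ω A (x + 1) N with hv
  -- the Bruhat cover
  have harrow : Arrow cs (cs.wordProd (p ++ v)) (cs.wordProd (p ++ ω x :: v)) := by
    refine ⟨_, refl_conj cs (ω x) (cs.wordProd v), ?_, ?_⟩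
    · rw [wordProd_append, wordProd_append, wordProd_cons]; group
    · rw [hred.eq, hred'.eq]; simp
  have hlen : cs.length (cs.wordProd (p ++ ω x :: v)) = cs.length (cs.wordProd (p ++ v)) + 1 := by
    rw [hred.eq, hred'.eq]; simp; omega
  have hnd2 := (cs.not_isLeftDescent_iff).1 hnd
  have hdesc2 := (cs.isLeftDescent_iff).1 hdesc
  rcases arrow_simple cs harrow (ω k) with heq | ⟨-, -, -, hlt⟩
  swap
  · omega
  have hps : cs.wordProd (ω k :: p) = cs.wordProd (p ++ [ω x]) := by
    rw [wordProd_append, wordProd_append, wordProd_cons] at heq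
    rw [wordProd_append, wordProd_cons, wordProd_singleton]
    apply mul_right_cancel (b := cs.wordProd v)
    rw [mul_assoc, heq, mul_assoc]
  have hredps : cs.IsReduced (p ++ [ω x]) := by
    apply reduced_append_left cs (b := v)
    simpa using hred'
  have hq : (seg ω C (k + 1) x ++ [ω x]).Sublist (p ++ [ω x]) :=
    (seg_sublist ω (fun m _ hm => hlow m hm)).append (List.Sublist.refl _)
  -- the conditions coming from `C`
  have hCcond : ∀ m, m < x →
      ¬ cs.IsLeftDescent (cs.wordProd (seg ω C (m + 1) x ++ [ω x])) (ω m) := by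
    intro m hm
    have e : seg ω C (m + 1) N = (seg ω C (m + 1) x ++ [ω x]) ++ seg ω C (x + 1) N := by
      rw [seg_append ω C (b := x) (by omega) hxN.le, seg_cons_mem ω hxN hxC]; simp
    apply not_desc_prefix cs (b := seg ω C (x + 1) N)
    · rw [← e]
      exact reduced_of_good cs ω _ _ _ (fun m _ h2 => hC m h2)
    · rw [← e]
      exact hC m (by omega)
  obtain ⟨l, hl, hlr, hle⟩ := subword_property cs hredps hps hq
  rcases List.sublist_cons_iff.1 hl with hl | ⟨r, rfl, hl'⟩
  · exact greedy_last cs ω C x (k + 1) (by omega) (fun m _ hm => hCcond m hm) l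
      (hl.trans (seg_sublist_full ω A _ _)) hlr hle
  · apply hCcond k hkx
    rw [← hle]
    have := (cs.not_isLeftDescent_iff).1 ((reduced_cons_iff cs _ _).1 hlr).2
    unfold IsLeftDescent
    rw [wordProd_cons, simple_mul_simple_cancel_left]
    omega

theorem exists_bound (A C : Finset ℕ) : ∃ N, (∀ k ∈ A, k < N) ∧ (∀ k ∈ C, k < N) := by
  have h : ∀ k ∈ A ∪ C, k < (A ∪ C).sup id + 1 := by
    intro k hk
    have := Finset.le_sup (f := id) hk
    simp only [id] at this
    omega
  exact ⟨_, fun k hk => h k (Finset.mem_union_left _ hk),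
    fun k hk => h k (Finset.mem_union_right _ hk)⟩

theorem sorted_insert {A C : Finset ℕ} {x : ℕ} (hA : IsSortedInf cs ω A) (hC : IsSortedInf cs ω C)
    (hxC : x ∈ C) (hxA : x ∉ A) (hlow : ∀ k < x, k ∈ C → k ∈ A) :
    IsSortedInf cs ω (insert x A) := by
  obtain ⟨N, h1, h2⟩ := exists_bound A C
  refine sorted_of_good cs ω (N := N) ?_
    (good_insert cs ω (good_of_sorted cs ω h1 hA) (good_of_sorted cs ω h2 hC) hxC hxA (h2 x hxC) hlow)
  intro k hk
  rcases Finset.mem_insert.1 hk with rfl | h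
  · exact h2 _ hxC
  · exact h1 k h

theorem exists_min {A C : Finset ℕ} (h : ¬ C ⊆ A) :
    ∃ x, x ∈ C ∧ x ∉ A ∧ ∀ k < x, k ∈ C → k ∈ A := by
  have hne : (C \ A).Nonempty := by
    rw [Finset.sdiff_nonempty]; exact h
  refine ⟨(C \ A).min' hne, ?_, ?_, ?_⟩
  · exact (Finset.mem_sdiff.1 (Finset.min'_mem _ hne)).1
  · exact (Finset.mem_sdiff.1 (Finset.min'_mem _ hne)).2
  · intro k hk hkC
    by_contra hkA
    have := Finset.min'_le (C \ A) k (Finset.mem_sdiff.2 ⟨hkC, hkA⟩)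
    omega

theorem desc_iff [DecidableEq B] (c : List B) (hnd : c.Nodup) (hpos : 0 < c.length)
    (hω : ∀ i, ω i = c.get ⟨i % c.length, Nat.mod_lt i hpos⟩) (A : Finset ℕ) :
    (∀ k : ℕ, ((A.filter fun i => i / c.length = k + 1).image fun i => ω i) ⊆
      ((A.filter fun i => i / c.length = k).image fun i => ω i)) ↔
    ∀ i ∈ A, c.length ≤ i → i - c.length ∈ A := by
  have hinj : ∀ i j, ω i = ω j → i % c.length = j % c.length := by
    intro i j h
    rw [hω, hω] at h
    have := (List.Nodup.get_inj_iff hnd).1 h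
    simpa using this
  constructor
  · intro h i hi hle
    obtain ⟨k, hk⟩ : ∃ k, i / c.length = k + 1 :=
      Nat.exists_eq_succ_of_ne_zero (Nat.div_pos hle hpos).ne'
    have hmem : ω i ∈ ((A.filter fun i => i / c.length = k + 1).image fun i => ω i) :=
      Finset.mem_image.2 ⟨i, Finset.mem_filter.2 ⟨hi, hk⟩, rfl⟩
    obtain ⟨j, hj, hji⟩ := Finset.mem_image.1 (h k hmem)
    obtain ⟨hjA, hjk⟩ := Finset.mem_filter.1 hj
    have hmod := hinj j i hji
    have e1 := Nat.div_add_mod i c.length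
    have e2 := Nat.div_add_mod j c.length
    rw [hk] at e1
    rw [hjk, hmod] at e2
    have : i - c.length = j := by
      rw [← e1, ← e2, mul_add]; omega
    rwa [this]
  · intro h k b hb
    obtain ⟨i, hi, rfl⟩ := Finset.mem_image.1 hb
    obtain ⟨hiA, hik⟩ := Finset.mem_filter.1 hi
    have hle : c.length ≤ i := by
      by_contra hc
      rw [Nat.div_eq_of_lt (by omega)] at hik
      omega
    have hmod : (i - c.length) % c.length = i % c.length := (Nat.mod_eq_sub_mod hle).symm
    refine Finset.mem_image.2 ⟨i - c.length, Finset.mem_filter.2 ⟨h i hiA hle, ?_⟩, ?_⟩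
    · have := Nat.div_eq_sub_div hpos hle
      omega
    · rw [hω, hω]
      simp only [hmod]

end Segments

/-- for a Coxeter word `c` and the cyclic word `c^∞`, the c-sortable
elements form a join-sublattice of the `c^∞`-sorting order (closed under unions,
containing the bottom element) which preserves cover relations, and the restriction of
the `c^∞`-sorting order to c-sortable elements is a join-distributive lattice (i.e. the
family of c-sortable sorted index sets is an antimatroid). -/
theorem csortables_join_distributive [DecidableEq B] (cs : CoxeterSystem M W)
    (c : List B) (hnd : c.Nodup) (hall : ∀ b : B, b ∈ c) (hpos : 0 < c.length)
    (ω : ℕ → B) (hω : ∀ i, ω i = c.get ⟨i % c.length, Nat.mod_lt i hpos⟩) :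
    (Sortable cs c ω ∅) ∧
    (∀ A C : Finset ℕ, Sortable cs c ω A → Sortable cs c ω C →
      Sortable cs c ω (A ∪ C)) ∧
    (∀ A C : Finset ℕ, Sortable cs c ω A → Sortable cs c ω C → A ⊂ C →
      (¬ ∃ D : Finset ℕ, Sortable cs c ω D ∧ A ⊂ D ∧ D ⊂ C) →
      ¬ ∃ D : Finset ℕ, IsSortedInf cs ω D ∧ A ⊂ D ∧ D ⊂ C) ∧
    (∀ A C : Finset ℕ, Sortable cs c ω A → Sortable cs c ω C → ¬ C ⊆ A →
      ∃ x ∈ C \ A, Sortable cs c ω (insert x A)) := by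
  have hs : ∀ A, Sortable cs c ω A ↔
      IsSortedInf cs ω A ∧ ∀ i ∈ A, c.length ≤ i → i - c.length ∈ A := fun A => by
    unfold Sortable
    rw [desc_iff ω c hnd hpos hω A]
  have hempty : Sortable cs c ω ∅ := by
    rw [hs]
    refine ⟨sorted_of_good cs ω (N := 0) (by simp) (fun k hk => by omega), by simp⟩
  have hext : ∀ A C : Finset ℕ, Sortable cs c ω A → Sortable cs c ω C → ¬ C ⊆ A →
      ∃ x ∈ C \ A, Sortable cs c ω (insert x A) := by
    intro A C hA hC hCA
    rw [hs] at hA hC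
    obtain ⟨x, hxC, hxA, hlow⟩ := exists_min hCA
    refine ⟨x, Finset.mem_sdiff.2 ⟨hxC, hxA⟩, (hs _).2
      ⟨sorted_insert cs ω hA.1 hC.1 hxC hxA hlow, ?_⟩⟩
    intro i hi hle
    rw [Finset.mem_insert] at hi ⊢
    rcases hi with rfl | hi
    · exact Or.inr (hlow _ (by omega) (hC.2 _ hxC hle))
    · exact Or.inr (hA.2 i hi hle)
  refine ⟨hempty, ?_, ?_, hext⟩
  · intro A C hA hC
    generalize hd : (C \ A).card = d
    induction d generalizing A with
    | zero =>
      rw [Finset.card_eq_zero, Finset.sdiff_eq_empty_iff_subset] at hd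
      rwa [Finset.union_eq_left.2 hd]
    | succ d ih =>
      have hCA : ¬ C ⊆ A := by
        intro h
        rw [Finset.sdiff_eq_empty_iff_subset.2 h] at hd
        simp at hd
      obtain ⟨x, hx, hxs⟩ := hext A C hA hC hCA
      have hcard : (C \ insert x A).card = d := by
        rw [Finset.sdiff_insert, Finset.card_erase_of_mem hx, hd]
        rfl
      have h := ih (insert x A) hxs hcard
      rwa [Finset.insert_union, Finset.insert_eq_of_mem
        (Finset.mem_union_right _ (Finset.mem_sdiff.1 hx).1)] at h
  · rintro A C hA hC hAC hcov ⟨D, -, hAD, hDC⟩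
    obtain ⟨x, hx, hxs⟩ := hext A C hA hC hAC.2
    obtain ⟨hxC, hxA⟩ := Finset.mem_sdiff.1 hx
    have h1 : insert x A ⊆ C := Finset.insert_subset hxC hAC.1
    have h2 : insert x A = C := by
      by_contra hne
      exact hcov ⟨insert x A, hxs, Finset.ssubset_insert hxA, Finset.ssubset_iff_subset_ne.2 ⟨h1, hne⟩⟩
    have c1 := Finset.card_lt_card hAD
    have c2 := Finset.card_lt_card hDC
    rw [← h2, Finset.card_insert_of_notMem hxA] at c2
    omega

end SortingPaper
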